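/- Let n ≥ 1, 0 < a < 1 and b = √(1 − a²). Let u : ℝⁿ → ℝ be a C² function with D²u(x) > −(a+b)I for every x ∈ ℝⁿ (admissibility), satisfying (√(a²+1)/b) · Σ_{i=1}^n arctan((λ_i(D²u(x)) + a − b)/(λ_i(D²u(x)) + a + b)) = −u(x) + (1/2)⟨x, Du(x)⟩ for all x ∈ ℝⁿ. Then u is a quadratic polynomial; more precisely, there exists a symmetric real n×n matrix A with eigenvalues λ̄₁, …, λ̄ₙ such that u(x) = −(√(a²+1)/b) · Σ_{i=1}^n arctan((λ̄_i + a − b)/(λ̄_i + a + b)) + (1/2)⟨x, Ax⟩ for all x ∈ ℝⁿ. -/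

import Mathlib

open Real Filter Matrix
open scoped RealInnerProductSpace

noncomputable section

/-- The Hessian matrix of `u` at `x`, with entries the second iterated derivatives
in the coordinate directions. -/
def Hess (n : ℕ) (u : EuclideanSpace ℝ (Fin n) → ℝ) (x : EuclideanSpace ℝ (Fin n)) :
    Matrix (Fin n) (Fin n) ℝ :=
  Matrix.of fun i j =>
    iteratedFDeriv ℝ 2 u x ![EuclideanSpace.single i 1, EuclideanSpace.single j 1]

open Classical in
/-- The eigenvalues of a real symmetric matrix (junk value `0` if not symmetric). -/
def eigs {n : ℕ} (A : Matrix (Fin n) (Fin n) ℝ) : Fin n → ℝ :=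
  if h : A.IsHermitian then h.eigenvalues else 0

/-- `u` is a quadratic polynomial:
`u x = (1/2)⟨x, A x⟩ + ⟨β, x⟩ + c` with `A` symmetric. -/
def IsQuadPoly (n : ℕ) (u : EuclideanSpace ℝ (Fin n) → ℝ) : Prop :=
  ∃ (A : Matrix (Fin n) (Fin n) ℝ) (β : EuclideanSpace ℝ (Fin n)) (c : ℝ), A.IsSymm ∧
    ∀ x, u x = (1/2) * (∑ i, ∑ j, A i j * x i * x j) + ⟪β, x⟫ + c

/-! Write the equation as `F (D²u) = w` with `w = -u + ½⟨x, Du⟩`. Differentiating it along the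
dilations shows that `w` solves `DF (D²u) D²w = ½⟨x, Dw⟩`, an elliptic equation whose drift points
outwards. Hence the bounded function `w` attains its maximum, and by Hopf's strong maximum
principle it is constant. Then `u + w` is homogeneous of degree two by Euler's identity, and being
`C²` at the origin it is a quadratic form.

Since `u` is only `C²`, the equation for `w` has no classical meaning. It holds in the viscosity
sense, because `w` is the locally uniform limit as `l → 1` of the `C²` functions
`(u (l x) - l² u x) / (l² - 1)`, whose Hessians are multiples of `D²u (l x) - D²u x`. -/

section Eigenvalues

section InnerProductSpace

variable {𝕜 E : Type*} [RCLike 𝕜] [NormedAddCommGroup E] [InnerProductSpace 𝕜 E]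
  [FiniteDimensional 𝕜 E] {n : ℕ} {S T : E →ₗ[𝕜] E}

open RCLike

lemma re_inner_map_self_eq_sum_eigenvalues (hS : S.IsSymmetric) (hn : Module.finrank 𝕜 E = n)
    (x : E) :
    re (inner 𝕜 (S x) x) =
      ∑ j, hS.eigenvalues hn j * ‖inner 𝕜 (hS.eigenvectorBasis hn j) x‖ ^ 2 := by
  rw [← (hS.eigenvectorBasis hn).sum_inner_mul_inner, map_sum]
  refine Finset.sum_congr rfl fun j _ => ?_
  rw [hS, hS.apply_eigenvectorBasis hn, inner_smul_right, mul_assoc, re_ofReal_mul,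
    inner_mul_symm_re_eq_norm, norm_mul, norm_inner_symm, sq]

lemma exists_ne_zero_of_card_lt_finrank {ι : Type*} [Fintype ι] (v : ι → E)
    (hι : Fintype.card ι < Module.finrank 𝕜 E) : ∃ x ≠ 0, ∀ j, inner 𝕜 (v j) x = 0 := by
  have hker := LinearMap.ker_ne_bot_of_finrank_lt
    (f := LinearMap.pi fun j => (innerSL 𝕜 (v j)).toLinearMap) (by simpa using hι)
  obtain ⟨x, hx, hx0⟩ := Submodule.exists_mem_ne_zero_of_ne_bot hker
  exact ⟨x, hx0, fun j => congrFun hx j⟩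

/- The `n - 1` conditions `⟪eⱼ(S), x⟫ = 0` for `k < j` and `⟪eⱼ(T), x⟫ = 0` for `j < k` have a
common nonzero solution `x`, and `λₖ(S) ‖x‖² ≤ ⟪S x, x⟫ ≤ ⟪T x, x⟫ ≤ λₖ(T) ‖x‖²` there. -/
lemma eigenvalues_le_eigenvalues (hS : S.IsSymmetric) (hT : T.IsSymmetric) (hST : S ≤ T)
    (hn : Module.finrank 𝕜 E = n) (k : Fin n) : hS.eigenvalues hn k ≤ hT.eigenvalues hn k := by
  set e := hS.eigenvectorBasis hn
  set e' := hT.eigenvectorBasis hn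
  obtain ⟨x, hx0, hx⟩ := exists_ne_zero_of_card_lt_finrank (𝕜 := 𝕜)
    (fun j : {j // j ≠ k} => if k < j then e j else e' j) (by
      simpa [hn] using Nat.sub_one_lt_of_lt k.pos)
  have lower : hS.eigenvalues hn k * ‖x‖ ^ 2 ≤ re (inner 𝕜 (S x) x) := by
    rw [re_inner_map_self_eq_sum_eigenvalues hS hn, ← e.sum_sq_norm_inner_right x, Finset.mul_sum]
    refine Finset.sum_le_sum fun j _ => ?_
    rcases le_or_gt j k with hj | hj
    · gcongr
      exact hS.eigenvalues_antitone hn hj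
    · have := hx ⟨j, hj.ne'⟩
      simp_all [e]
  have upper : re (inner 𝕜 (T x) x) ≤ hT.eigenvalues hn k * ‖x‖ ^ 2 := by
    rw [re_inner_map_self_eq_sum_eigenvalues hT hn, ← e'.sum_sq_norm_inner_right x, Finset.mul_sum]
    refine Finset.sum_le_sum fun j _ => ?_
    rcases le_or_gt k j with hj | hj
    · gcongr
      exact hT.eigenvalues_antitone hn hj
    · have := hx ⟨j, hj.ne⟩
      simp_all [e', hj.not_gt]
  have hle : re (inner 𝕜 (S x) x) ≤ re (inner 𝕜 (T x) x) := by
    simpa [inner_sub_left] using ((LinearMap.le_def S T).mp hST).re_inner_nonneg_left x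
  exact le_of_mul_le_mul_right (lower.trans (hle.trans upper)) (by positivity)

end InnerProductSpace

variable {ι : Type*} [Fintype ι] [DecidableEq ι] {A B : Matrix ι ι ℝ}

lemma eigenvalues_le_of_posSemidef_sub (hA : A.IsHermitian) (hB : B.IsHermitian)
    (h : (B - A).PosSemidef) (i : ι) : hA.eigenvalues i ≤ hB.eigenvalues i := by
  refine eigenvalues_le_eigenvalues (isSymmetric_toEuclideanLin_iff.mpr hA)
    (isSymmetric_toEuclideanLin_iff.mpr hB) ?_ finrank_euclideanSpace _
  rw [LinearMap.le_def, ← map_sub]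
  exact Matrix.isPositive_toEuclideanLin_iff.mpr h

lemma mul_trace_sub_le_sum_eigenvalues_sub (hA : A.IsHermitian) (hB : B.IsHermitian)
    (h : (B - A).PosSemidef) {f : ℝ → ℝ} {s : Set ℝ} {c : ℝ}
    (hf : ∀ x ∈ s, ∀ y ∈ s, x ≤ y → c * (y - x) ≤ f y - f x)
    (hAs : ∀ i, hA.eigenvalues i ∈ s) (hBs : ∀ i, hB.eigenvalues i ∈ s) :
    c * (B - A).trace ≤ ∑ i, f (hB.eigenvalues i) - ∑ i, f (hA.eigenvalues i) := by
  rw [trace_sub, hA.trace_eq_sum_eigenvalues, hB.trace_eq_sum_eigenvalues,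
    ← Finset.sum_sub_distrib, ← Finset.sum_sub_distrib, Finset.mul_sum]
  exact Finset.sum_le_sum fun i _ =>
    hf _ (hAs i) _ (hBs i) (eigenvalues_le_of_posSemidef_sub hA hB h i)

lemma exists_dotProduct_mulVec_eq_eigenvalues (hA : A.IsHermitian) (i : ι) :
    ∃ v, v ⬝ᵥ v = 1 ∧ v ⬝ᵥ A *ᵥ v = hA.eigenvalues i := by
  have hv : (hA.eigenvectorBasis i).ofLp ⬝ᵥ (hA.eigenvectorBasis i).ofLp = 1 := by
    have := EuclideanSpace.real_norm_sq_eq (hA.eigenvectorBasis i)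
    rw [hA.eigenvectorBasis.norm_eq_one, one_pow] at this
    simpa [dotProduct, sq] using this.symm
  refine ⟨_, hv, ?_⟩
  rw [hA.mulVec_eigenvectorBasis, dotProduct_smul, hv, smul_eq_mul, mul_one]

lemma eigenvalues_mem_Icc (hA : A.IsHermitian) {l r : ℝ} (hl : ∀ v, l * (v ⬝ᵥ v) ≤ v ⬝ᵥ A *ᵥ v)
    (hr : ∀ v, v ⬝ᵥ A *ᵥ v ≤ r * (v ⬝ᵥ v)) (i : ι) : hA.eigenvalues i ∈ Set.Icc l r := by
  obtain ⟨v, hv, hAv⟩ := exists_dotProduct_mulVec_eq_eigenvalues hA i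
  exact ⟨by simpa [hv, hAv] using hl v, by simpa [hv, hAv] using hr v⟩

lemma lt_eigenvalues_of_posDef_sub {l : ℝ} (hA : A.IsHermitian)
    (h : (A - l • (1 : Matrix ι ι ℝ)).PosDef) (i : ι) : l < hA.eigenvalues i := by
  obtain ⟨v, hv, hAv⟩ := exists_dotProduct_mulVec_eq_eigenvalues hA i
  have hv0 : v ≠ 0 := by
    rintro rfl
    simp at hv
  have := h.dotProduct_mulVec_pos hv0
  simp only [star_trivial, sub_mulVec, dotProduct_sub, smul_mulVec, one_mulVec, dotProduct_smul,
    hv, hAv, smul_eq_mul, mul_one] at this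
  exact sub_pos.mp this

/- Compare both `A` and `B + κ p ⊗ p` with `A + m I`: the traces of the differences control the
sums from both sides. -/
lemma sum_eigenvalues_add_le (hA : A.IsHermitian) (hB : B.IsHermitian) {f : ℝ → ℝ}
    {c L l r m κ : ℝ} {p : ι → ℝ} (hc : 0 ≤ c) (hm : 0 ≤ m) (hκ : 0 ≤ κ)
    (hBA : ∀ v, v ⬝ᵥ B *ᵥ v + κ * (p ⬝ᵥ v) ^ 2 ≤ v ⬝ᵥ A *ᵥ v + m * (v ⬝ᵥ v))
    (hAl : ∀ v, l * (v ⬝ᵥ v) ≤ v ⬝ᵥ A *ᵥ v) (hAr : ∀ v, v ⬝ᵥ A *ᵥ v + m * (v ⬝ᵥ v) ≤ r * (v ⬝ᵥ v))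
    (hBl : ∀ v, l * (v ⬝ᵥ v) ≤ v ⬝ᵥ B *ᵥ v)
    (hfc : ∀ x ∈ Set.Icc l r, ∀ y ∈ Set.Icc l r, x ≤ y → c * (y - x) ≤ f y - f x)
    (hfL : ∀ x ∈ Set.Icc l r, ∀ y ∈ Set.Icc l r, x ≤ y → f y - f x ≤ L * (y - x)) :
    ∑ i, f (hB.eigenvalues i) + c * (κ * (p ⬝ᵥ p)) ≤
      ∑ i, f (hA.eigenvalues i) + L * (Fintype.card ι * m) := by
  set C := A + m • (1 : Matrix ι ι ℝ)
  have hC : C.IsHermitian := hA.add (isHermitian_one.smul (IsSelfAdjoint.all m))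
  have hCv (v : ι → ℝ) : v ⬝ᵥ C *ᵥ v = v ⬝ᵥ A *ᵥ v + m * (v ⬝ᵥ v) := by
    simp [C, add_mulVec, smul_mulVec]
  have hvv (v : ι → ℝ) : 0 ≤ v ⬝ᵥ v := by simpa using dotProduct_star_self_nonneg v
  have hAI := eigenvalues_mem_Icc hA hAl fun v =>
    (le_add_of_nonneg_right (mul_nonneg hm (hvv v))).trans (hAr v)
  have hBI := eigenvalues_mem_Icc hB hBl fun v =>
    ((le_add_of_nonneg_right (by positivity)).trans (hBA v)).trans (hAr v)
  have hCI := eigenvalues_mem_Icc hC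
    (fun v => (hAl v).trans (by rw [hCv]; exact le_add_of_nonneg_right (mul_nonneg hm (hvv v))))
    fun v => (hCv v).trans_le (hAr v)
  have hP : (κ • vecMulVec p p).PosSemidef := (posSemidef_vecMulVec_self_star p).smul hκ
  have hCBP : (C - B - κ • vecMulVec p p).PosSemidef := by
    refine .of_dotProduct_mulVec_nonneg ((hC.sub hB).sub hP.1) fun v => ?_
    have := hBA v
    simp only [star_trivial, sub_mulVec, dotProduct_sub, hCv, smul_mulVec, vecMulVec_mulVec,
      dotProduct_smul, dotProduct_comm v p, op_smul_eq_smul, smul_eq_mul]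
    linarith
  have hCB : (C - B).PosSemidef := by simpa using hCBP.add hP
  have hCA : (C - A).PosSemidef := by simpa [C] using PosSemidef.one.smul hm
  have upper := mul_trace_sub_le_sum_eigenvalues_sub hA hC hCA (f := fun x => -f x) (c := -L)
    (fun x hx y hy hxy => by linarith [hfL x hx y hy hxy]) hAI hCI
  have lower := mul_trace_sub_le_sum_eigenvalues_sub hB hC hCB hfc hBI hCI
  have trace_CA : (C - A).trace = Fintype.card ι * m := by simp [C, mul_comm]
  have trace_CB : κ * (p ⬝ᵥ p) ≤ (C - B).trace := by
    simpa [trace_sub, trace_vecMulVec] using hCBP.trace_nonneg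
  have := mul_le_mul_of_nonneg_left trace_CB hc
  simp only [trace_CA, Finset.sum_neg_distrib] at upper
  linarith

end Eigenvalues

section LocalMaxima

open Topology

lemma deriv_deriv_nonpos_of_isLocalMax {g : ℝ → ℝ} {t : ℝ} (hg : ContinuousAt g t)
    (h : IsLocalMax g t) : deriv (deriv g) t ≤ 0 := by
  by_contra! hpos
  have hmin : IsLocalMin g t := isLocalMin_of_deriv_deriv_pos hpos h.deriv_eq_zero hg
  have hconst : g =ᶠ[𝓝 t] fun _ => g t := by
    filter_upwards [h, hmin] with s using le_antisymm
  simp [hconst.deriv.deriv_eq] at hpos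

lemma fderiv_fderiv_nonpos_of_isLocalMax {E : Type*} [NormedAddCommGroup E] [NormedSpace ℝ E]
    {u : E → ℝ} {x : E} (hu : ContDiff ℝ 2 u) (h : IsLocalMax u x) (ξ : E) :
    fderiv ℝ (fderiv ℝ u) x ξ ξ ≤ 0 := by
  have line (t : ℝ) : HasDerivAt (fun t : ℝ => x + t • ξ) ξ t := by
    simpa using ((hasDerivAt_id t).smul_const ξ).const_add x
  have hderiv : deriv (fun t : ℝ => u (x + t • ξ)) = fun t => fderiv ℝ u (x + t • ξ) ξ :=
    funext fun t =>
      ((hu.differentiable two_ne_zero _).hasFDerivAt.comp_hasDerivAt t (line t)).deriv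
  have hderiv₂ : HasDerivAt (fun t : ℝ => fderiv ℝ u (x + t • ξ) ξ)
      (fderiv ℝ (fderiv ℝ u) x ξ ξ) 0 := by
    have := ((hu.fderiv_right (m := 1) le_rfl).differentiable one_ne_zero
      (x + (0 : ℝ) • ξ)).hasFDerivAt.comp_hasDerivAt 0 (line 0)
    simpa using this.clm_apply (hasDerivAt_const 0 ξ)
  have hcont : Tendsto (fun t : ℝ => x + t • ξ) (𝓝 0) (𝓝 x) := by
    simpa using (line 0).continuousAt.tendsto
  rw [← hderiv₂.deriv, ← hderiv]
  refine deriv_deriv_nonpos_of_isLocalMax ?_ ?_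
  · exact hu.continuous.continuousAt.comp (line 0).continuousAt
  · simpa [IsLocalMax, IsMaxFilter] using hcont.eventually h

lemma fderiv_fderiv_add_smul {E : Type*} [NormedAddCommGroup E] [NormedSpace ℝ E] {u v : E → ℝ}
    (hu : ContDiff ℝ 2 u) (hv : ContDiff ℝ 2 v) (a : ℝ) (x : E) :
    fderiv ℝ (fderiv ℝ (u + a • v)) x = fderiv ℝ (fderiv ℝ u) x + a • fderiv ℝ (fderiv ℝ v) x := by
  have first : fderiv ℝ (u + a • v) = fderiv ℝ u + a • fderiv ℝ v := funext fun y =>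
    ((hu.differentiable two_ne_zero y).hasFDerivAt.add
      ((hv.differentiable two_ne_zero y).hasFDerivAt.const_smul a)).fderiv
  have differentiable {v : E → ℝ} (hv : ContDiff ℝ 2 v) : Differentiable ℝ (fderiv ℝ v) :=
    (hv.fderiv_right (m := 1) le_rfl).differentiable one_ne_zero
  rw [first]
  exact ((differentiable hu x).hasFDerivAt.add
    ((differentiable hv x).hasFDerivAt.const_smul a)).fderiv

lemma frequently_isLocalMax_of_tendstoLocallyUniformly {ι X : Type*} [MetricSpace X]
    [ProperSpace X] {F : Filter ι} [F.NeBot] {v : ι → X → ℝ} {w : X → ℝ} {x₀ : X} {ε : ℝ}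
    (hv : TendstoLocallyUniformly v w F) (hcont : ∀ i, Continuous (v i))
    (hw : IsLocalMax w x₀) (hε : 0 < ε) :
    ∃ᶠ p in F ×ˢ 𝓝 x₀, IsLocalMax (fun y => v p.1 y - ε * dist y x₀ ^ 2) p.2 := by
  intro hnot
  obtain ⟨P, hP, Q, hQ, hPQ⟩ := eventually_prod_iff.mp hnot
  obtain ⟨r, hr, hball⟩ := Metric.nhds_basis_closedBall.eventually_iff.mp (hw.and hQ)
  have hclose := Metric.tendstoUniformlyOn_iff.mp
    (tendstoLocallyUniformly_iff_forall_isCompact.mp hv _ (isCompact_closedBall x₀ r))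
    (ε * r ^ 2 / 2) (by positivity)
  obtain ⟨i, hi, hPi⟩ := (hclose.and hP).exists
  have hx₀ : x₀ ∈ Metric.closedBall x₀ r := Metric.mem_closedBall_self hr.le
  obtain ⟨x, hx, hmax⟩ := (isCompact_closedBall x₀ r).exists_isMaxOn ⟨x₀, hx₀⟩
    (f := fun y => v i y - ε * dist y x₀ ^ 2) (by have := hcont i; fun_prop)
  have hxr : dist x x₀ < r := by
    refine lt_of_le_of_ne hx fun hxr => ?_
    have h := hmax hx₀
    simp only [Set.mem_ofPred_eq, dist_self, hxr] at h
    have h₀ := abs_lt.mp (hi x₀ hx₀)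
    have h₁ := abs_lt.mp (hi x hx)
    linarith [(hball hx).1]
  exact hPQ hPi (hball hx).2
    (hmax.isLocalMax (Filter.mem_of_superset (Metric.isOpen_ball.mem_nhds hxr)
      Metric.ball_subset_closedBall))

end LocalMaxima

section ScalingQuotient

open Topology

variable {E : Type*} [NormedAddCommGroup E] [NormedSpace ℝ E] {u : E → ℝ}

/-- The right-hand side `-u + ½⟨x, Du⟩` of the equation. By Euler's identity it vanishes exactly
when `u` is homogeneous of degree two. -/
def eulerDefect (u : E → ℝ) (x : E) : ℝ :=
  -u x + 1 / 2 * fderiv ℝ u x x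

/-- The difference quotient at `1` of `t ↦ u (t • x) - t² u x` in the variable `t²`, a
replacement for `eulerDefect u` that is as smooth as `u`. -/
def scalingQuotient (u : E → ℝ) (l : ℝ) (x : E) : ℝ :=
  (u (l • x) - l ^ 2 * u x) / (l ^ 2 - 1)

lemma continuous_eulerDefect (hu : ContDiff ℝ 1 u) : Continuous (eulerDefect u) := by
  have := hu.continuous
  have := hu.continuous_fderiv one_ne_zero
  unfold eulerDefect
  fun_prop

lemma contDiff_scalingQuotient {m : WithTop ℕ∞} (hu : ContDiff ℝ m u) (l : ℝ) :
    ContDiff ℝ m (scalingQuotient u l) := by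
  unfold scalingQuotient
  fun_prop

lemma fderiv_dilation_sub {F : Type*} [NormedAddCommGroup F] [NormedSpace ℝ F] {v : E → F}
    (hv : Differentiable ℝ v) (a b l : ℝ) :
    fderiv ℝ (fun x => a • v (l • x) - b • v x) =
      fun x => (a * l) • fderiv ℝ v (l • x) - b • fderiv ℝ v x := by
  ext1 x
  have hl : DifferentiableAt ℝ (fun x => v (l • x)) x := by fun_prop
  have h := ((hl.hasFDerivAt.const_smul a).sub ((hv x).hasFDerivAt.const_smul b)).fderiv
  rwa [fderiv_comp_smul, smul_smul] at h

lemma hasDerivAt_comp_smul (hu : Differentiable ℝ u) (x : E) (t : ℝ) :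
    HasDerivAt (fun t : ℝ => u (t • x)) (fderiv ℝ u (t • x) x) t := by
  have h := (hasDerivAt_id t).smul_const x
  rw [one_smul] at h
  exact (hu (t • x)).hasFDerivAt.comp_hasDerivAt t h

lemma hasDerivAt_dilation_remainder (hu : Differentiable ℝ u) (x : E) (t : ℝ) :
    HasDerivAt (fun t : ℝ => u (t • x) - t ^ 2 * u x - (t ^ 2 - 1) * eulerDefect u x)
      (fderiv ℝ u (t • x) x - t * fderiv ℝ u x x) t := by
  have hsq : HasDerivAt (fun t : ℝ => t ^ 2) (2 * t) t := by simpa using hasDerivAt_pow 2 t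
  refine (((hasDerivAt_comp_smul hu x t).sub (hsq.mul_const (u x))).sub
    ((hsq.sub_const 1).mul_const (eulerDefect u x))).congr_deriv ?_
  simp only [eulerDefect]
  ring

lemma tendstoLocallyUniformly_scalingQuotient (hu : ContDiff ℝ 1 u) :
    TendstoLocallyUniformly (scalingQuotient u) (eulerDefect u) (𝓝[>] 1) := by
  rw [Metric.tendstoLocallyUniformly_iff]
  intro η hη x₀
  have hcont : Continuous fun q : ℝ × E =>
      ‖fderiv ℝ u (q.1 • q.2) q.2 - q.1 * fderiv ℝ u q.2 q.2‖ := by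
    have := hu.continuous_fderiv one_ne_zero
    fun_prop
  have hsmall : ∀ᶠ q : ℝ × E in 𝓝 1 ×ˢ 𝓝 x₀,
      ‖fderiv ℝ u (q.1 • q.2) q.2 - q.1 * fderiv ℝ u q.2 q.2‖ < η := by
    rw [← nhds_prod_eq]
    exact (hcont.tendsto _).eventually (gt_mem_nhds (by simpa using hη))
  obtain ⟨P, hP, Q, hQ, hPQ⟩ := eventually_prod_iff.mp hsmall
  obtain ⟨δ, hδ, hball⟩ := Metric.nhds_basis_ball.eventually_iff.mp hP
  refine ⟨{x | Q x}, hQ, ?_⟩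
  filter_upwards [self_mem_nhdsWithin, nhdsWithin_le_nhds (Metric.ball_mem_nhds 1 hδ)]
    with l (hl : 1 < l) hlδ x hx
  have hmv := (convex_ball (1 : ℝ) δ).norm_image_sub_le_of_norm_hasDerivWithin_le
    (fun t _ =>
      (hasDerivAt_dilation_remainder (hu.differentiable one_ne_zero) x t).hasDerivWithinAt)
    (fun t ht => (hPQ (hball ht) hx).le) (Metric.mem_ball_self hδ) hlδ
  have hσ : 0 < l ^ 2 - 1 := by nlinarith
  rw [dist_comm, Real.dist_eq, scalingQuotient, div_sub' hσ.ne', abs_div, abs_of_pos hσ,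
    div_lt_iff₀ hσ]
  calc |u (l • x) - l ^ 2 * u x - (l ^ 2 - 1) * eulerDefect u x|
      ≤ η * (l - 1) := by simpa [abs_of_pos (sub_pos.mpr hl)] using hmv
    _ < η * (l ^ 2 - 1) := by gcongr; nlinarith

end ScalingQuotient

section Radial

variable {E : Type*} [NormedAddCommGroup E] [InnerProductSpace ℝ E] {g : ℝ → ℝ}

lemma hasFDerivAt_comp_norm_sub_sq (hg : Differentiable ℝ g) (z x : E) :
    HasFDerivAt (fun x => g (‖x - z‖ ^ 2))
      ((2 * deriv g (‖x - z‖ ^ 2)) • innerSL ℝ (x - z)) x := by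
  have hnorm := (hasStrictFDerivAt_norm_sq (x - z)).hasFDerivAt.comp x
    ((hasFDerivAt_id x).sub_const z)
  refine ((hg _).hasDerivAt.comp_hasFDerivAt x hnorm).congr_fderiv ?_
  ext ξ
  simp only [id_eq, Function.comp_apply, map_sub, ContinuousLinearMap.comp_id, _root_.smul_apply,
    _root_.sub_apply, coe_innerSL_apply, nsmul_eq_mul, Nat.cast_ofNat, smul_eq_mul]
  ring

lemma fderiv_fderiv_comp_norm_sub_sq (hg : ContDiff ℝ 2 g) (z x ξ : E) :
    fderiv ℝ (fderiv ℝ fun x => g (‖x - z‖ ^ 2)) x ξ ξ =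
      2 * deriv g (‖x - z‖ ^ 2) * ‖ξ‖ ^ 2
        + 4 * deriv (deriv g) (‖x - z‖ ^ 2) * ⟪x - z, ξ⟫ ^ 2 := by
  have first : fderiv ℝ (fun x => g (‖x - z‖ ^ 2)) =
      fun x => (2 * deriv g (‖x - z‖ ^ 2)) • innerSL ℝ (x - z) :=
    funext fun x => (hasFDerivAt_comp_norm_sub_sq (hg.differentiable two_ne_zero) z x).fderiv
  have hcoeff := (hasFDerivAt_comp_norm_sub_sq
    ((contDiff_succ_iff_deriv (n := 1)).mp hg |>.2.2.differentiable one_ne_zero) z x).const_mul 2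
  have hinner : HasFDerivAt (fun x => innerSL ℝ (x - z)) (innerSL ℝ (E := E)) x := by
    exact (innerSL ℝ (E := E)).hasFDerivAt.comp x ((hasFDerivAt_id x).sub_const z)
  rw [first, (hcoeff.fun_smul hinner).fderiv]
  have hξ : innerSL ℝ ξ ξ = ‖ξ‖ ^ 2 := real_inner_self_eq_norm_sq ξ
  simp only [map_sub, _root_.add_apply, _root_.smul_apply, ContinuousLinearMap.smulRight_apply,
    _root_.sub_apply, coe_innerSL_apply, smul_eq_mul, hξ, inner_sub_left]
  ring

end Radial

section Viscosity

open Topology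

variable {E : Type*} [NormedAddCommGroup E] [InnerProductSpace ℝ E] {u w : E → ℝ} {s : Set E}
  {N c : ℝ}

/-- `w x = F (D²u x)` on `s` for an operator `F` that is uniformly elliptic on the range of `D²u`
(with Pucci constants `c` and `N / dim E`), expressed without `F`. -/
def EllipticOn (u w : E → ℝ) (N c : ℝ) (s : Set E) : Prop :=
  ∀ x ∈ s, ∀ y ∈ s, ∀ (p : E) (m κ : ℝ), 0 ≤ m → m ≤ 1 → 0 ≤ κ →
    (∀ ξ, fderiv ℝ (fderiv ℝ u) y ξ ξ + κ * ⟪p, ξ⟫ ^ 2 ≤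
      fderiv ℝ (fderiv ℝ u) x ξ ξ + m * ‖ξ‖ ^ 2) →
    w y + c * (κ * ‖p‖ ^ 2) ≤ w x + N * m

/-- In the viscosity sense at `x`, an extremal operator of `D²w` with Pucci constants `c` and
`N / dim E` is at least `½⟨x, Dw⟩`. Only test functions with `D²φ x ≤ k I - κ p ⊗ p` occur, so
the inequality is stated for the bounds `k`, `κ` and `p`. -/
def IsSubsolutionAt (N c : ℝ) (w : E → ℝ) (x : E) : Prop :=
  ∀ φ : E → ℝ, ContDiff ℝ 2 φ → IsLocalMax (w - φ) x → ∀ (p : E) (k κ : ℝ), 0 ≤ k → 0 ≤ κ →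
    (∀ ξ, fderiv ℝ (fderiv ℝ φ) x ξ ξ + κ * ⟪p, ξ⟫ ^ 2 ≤ k * ‖ξ‖ ^ 2) →
    1 / 2 * fderiv ℝ φ x x + c * (κ * ‖p‖ ^ 2) ≤ N * k

lemma fderiv_scalingQuotient (hu : Differentiable ℝ u) (l : ℝ) :
    fderiv ℝ (scalingQuotient u l) = fun x =>
      (l / (l ^ 2 - 1)) • fderiv ℝ u (l • x) - (l ^ 2 / (l ^ 2 - 1)) • fderiv ℝ u x := by
  have h : scalingQuotient u l =
      fun x => (1 / (l ^ 2 - 1)) • u (l • x) - (l ^ 2 / (l ^ 2 - 1)) • u x := by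
    ext x
    simp only [scalingQuotient, smul_eq_mul]
    ring
  rw [h, fderiv_dilation_sub hu, one_div_mul_eq_div]

lemma fderiv_fderiv_scalingQuotient (hu : ContDiff ℝ 2 u) (l : ℝ) :
    fderiv ℝ (fderiv ℝ (scalingQuotient u l)) = fun x => (l ^ 2 / (l ^ 2 - 1)) •
      (fderiv ℝ (fderiv ℝ u) (l • x) - fderiv ℝ (fderiv ℝ u) x) := by
  rw [fderiv_scalingQuotient (hu.differentiable two_ne_zero),
    fderiv_dilation_sub ((hu.fderiv_right (m := 1) le_rfl).differentiable one_ne_zero)]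
  ext1 x
  rw [smul_sub, div_mul_eq_mul_div, ← sq]

lemma eulerDefect_smul_sub_of_isLocalMax {φ : E → ℝ} {x : E} {l : ℝ} (hu : ContDiff ℝ 2 u)
    (hφ : ContDiff ℝ 2 φ) (hl : 1 < l) (hmax : IsLocalMax (scalingQuotient u l - φ) x) :
    eulerDefect u (l • x) - eulerDefect u x =
      (l ^ 2 - 1) * (1 / 2 * fderiv ℝ φ x x - (scalingQuotient u l x - eulerDefect u x)) := by
  have hσ : l ^ 2 - 1 ≠ 0 := by nlinarith
  have first := hmax.fderiv_eq_zero
  rw [fderiv_sub ((contDiff_scalingQuotient hu l).differentiable two_ne_zero x)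
    (hφ.differentiable two_ne_zero x), sub_eq_zero,
    fderiv_scalingQuotient (hu.differentiable two_ne_zero)] at first
  rw [← first]
  simp only [eulerDefect, scalingQuotient, map_smul, _root_.sub_apply, _root_.smul_apply,
    smul_eq_mul]
  field_simp
  ring

lemma fderiv_fderiv_smul_le_of_isLocalMax {φ : E → ℝ} {x : E} {l : ℝ} (hu : ContDiff ℝ 2 u)
    (hφ : ContDiff ℝ 2 φ) (hl : 1 < l) (hmax : IsLocalMax (scalingQuotient u l - φ) x) (ξ : E) :
    fderiv ℝ (fderiv ℝ u) (l • x) ξ ξ ≤ fderiv ℝ (fderiv ℝ u) x ξ ξ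
      + (l ^ 2 - 1) / l ^ 2 * fderiv ℝ (fderiv ℝ φ) x ξ ξ := by
  have hσ : 0 < l ^ 2 - 1 := by nlinarith
  have hq := contDiff_scalingQuotient hu l
  rw [sub_eq_add_neg, ← neg_one_smul ℝ φ] at hmax
  have second := fderiv_fderiv_nonpos_of_isLocalMax
    (u := scalingQuotient u l + (-1 : ℝ) • φ) (hq.add (hφ.const_smul (-1 : ℝ))) hmax ξ
  rw [fderiv_fderiv_add_smul hq hφ, fderiv_fderiv_scalingQuotient hu] at second
  simp only [_root_.add_apply, _root_.sub_apply, _root_.smul_apply, smul_eq_mul, neg_one_mul,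
    ← sub_eq_add_neg, sub_nonpos] at second
  rw [← inv_div, inv_mul_le_iff₀ (by positivity)] at second
  linarith

/- At the maximum, `D²u (l x) ≤ D²u x + (l² - 1) / l² D²φ x`, which ellipticity turns into a bound
of `w (l x) - w x`; the first-order condition evaluates the same difference exactly. -/
lemma EllipticOn.le_of_isLocalMax_scalingQuotient_sub {φ : E → ℝ} {x p : E} {l k κ : ℝ}
    (h : EllipticOn u (eulerDefect u) N c s) (hu : ContDiff ℝ 2 u) (hφ : ContDiff ℝ 2 φ)
    (hx : x ∈ s) (hlx : l • x ∈ s) (hl : 1 < l)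
    (hmax : IsLocalMax (scalingQuotient u l - φ) x) (hk : 0 ≤ k) (hκ : 0 ≤ κ)
    (hlk : (l ^ 2 - 1) / l ^ 2 * k ≤ 1)
    (hφk : ∀ ξ, fderiv ℝ (fderiv ℝ φ) x ξ ξ + κ * ⟪p, ξ⟫ ^ 2 ≤ k * ‖ξ‖ ^ 2) :
    l ^ 2 * (1 / 2 * fderiv ℝ φ x x - (scalingQuotient u l x - eulerDefect u x))
      + c * (κ * ‖p‖ ^ 2) ≤ N * k := by
  have hσ : 0 < l ^ 2 - 1 := by nlinarith
  set t := (l ^ 2 - 1) / l ^ 2 with ht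
  have ht0 : 0 < t := by positivity
  have hle (ξ : E) : fderiv ℝ (fderiv ℝ u) (l • x) ξ ξ + t * κ * ⟪p, ξ⟫ ^ 2 ≤
      fderiv ℝ (fderiv ℝ u) x ξ ξ + t * k * ‖ξ‖ ^ 2 := by
    have := fderiv_fderiv_smul_le_of_isLocalMax hu hφ hl hmax ξ
    have := mul_le_mul_of_nonneg_left (hφk ξ) ht0.le
    linarith
  have hw := h x hx (l • x) hlx p (t * k) (t * κ) (by positivity) hlk (by positivity) hle
  have hdiff := eulerDefect_smul_sub_of_isLocalMax hu hφ hl hmax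
  have hσt : l ^ 2 - 1 = t * l ^ 2 := by rw [ht]; field_simp
  rw [hσt] at hdiff
  refine le_of_mul_le_mul_left ?_ ht0
  linarith

lemma isSubsolutionAt_of_forall_perturbation {x : E} (hw : ∀ φ : E → ℝ, ContDiff ℝ 2 φ →
    IsLocalMax (w - φ) x → ∀ (p : E) (k κ ε : ℝ), 0 ≤ k → 0 ≤ κ → 0 < ε →
    (∀ ξ, fderiv ℝ (fderiv ℝ φ) x ξ ξ + κ * ⟪p, ξ⟫ ^ 2 ≤ k * ‖ξ‖ ^ 2) →
    1 / 2 * fderiv ℝ φ x x + c * (κ * ‖p‖ ^ 2) ≤ N * (k + ε)) : IsSubsolutionAt N c w x := by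
  intro φ hφ hmax p k κ hk hκ hφk
  have hlim : Tendsto (fun ε : ℝ => N * (k + ε)) (𝓝[>] 0) (𝓝 (N * (k + 0))) :=
    (Continuous.tendsto (by fun_prop) 0).mono_left nhdsWithin_le_nhds
  rw [add_zero] at hlim
  exact ge_of_tendsto hlim (eventually_mem_nhdsWithin.mono fun ε hε =>
    hw φ hφ hmax p k κ ε hk hκ hε hφk)

lemma eventually_fderiv_fderiv_le_add {φ : E → ℝ} {x₀ p : E} {k κ δ : ℝ} (hφ : ContDiff ℝ 2 φ)
    (hφk : ∀ ξ, fderiv ℝ (fderiv ℝ φ) x₀ ξ ξ + κ * ⟪p, ξ⟫ ^ 2 ≤ k * ‖ξ‖ ^ 2) (hδ : 0 < δ) :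
    ∀ᶠ x in 𝓝 x₀, ∀ ξ,
      fderiv ℝ (fderiv ℝ φ) x ξ ξ + κ * ⟪p, ξ⟫ ^ 2 ≤ (k + δ) * ‖ξ‖ ^ 2 := by
  have hcont : Continuous (fderiv ℝ (fderiv ℝ φ)) :=
    (hφ.fderiv_right (m := 1) le_rfl).continuous_fderiv one_ne_zero
  filter_upwards [(Metric.continuous_iff' (α := E →L[ℝ] E →L[ℝ] ℝ)).mp hcont x₀ δ hδ] with x hx ξ
  have hdiff := (fderiv ℝ (fderiv ℝ φ) x - fderiv ℝ (fderiv ℝ φ) x₀).le_of_opNorm₂_le_of_le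
    (dist_eq_norm _ (fderiv ℝ (fderiv ℝ φ) x₀) ▸ hx.le) le_rfl le_rfl (x := ξ) (y := ξ)
  have := (le_abs_self _).trans hdiff
  simp only [_root_.sub_apply] at this
  linarith [hφk ξ]

lemma fderiv_fderiv_norm_sub_sq (z x ξ : E) :
    fderiv ℝ (fderiv ℝ fun x => ‖x - z‖ ^ 2) x ξ ξ = 2 * ‖ξ‖ ^ 2 := by
  simpa using fderiv_fderiv_comp_norm_sub_sq contDiff_id z x ξ

lemma tendsto_scalingQuotient_sub_eulerDefect (hu : ContDiff ℝ 1 u) (x₀ : E) :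
    Tendsto (fun q : ℝ × E => scalingQuotient u q.1 q.2 - eulerDefect u q.2)
      (𝓝[>] 1 ×ˢ 𝓝 x₀) (𝓝 0) := by
  have h := tendstoLocallyUniformly_iff_forall_tendsto.mp
    (tendstoLocallyUniformly_scalingQuotient hu) x₀
  rw [tendsto_uniformity_iff_dist_tendsto_zero] at h
  exact squeeze_zero_norm (fun q => (dist_eq_norm' _ _).ge) h

lemma EllipticOn.le_of_frequently_isLocalMax {φ : E → ℝ} {x₀ p : E} {k κ : ℝ}
    (h : EllipticOn u (eulerDefect u) N c s) (hu : ContDiff ℝ 2 u) (hφ : ContDiff ℝ 2 φ)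
    (hs : s ∈ 𝓝 x₀) (hk : 0 ≤ k) (hκ : 0 ≤ κ)
    (hmax : ∃ᶠ q : ℝ × E in 𝓝[>] 1 ×ˢ 𝓝 x₀, IsLocalMax (scalingQuotient u q.1 - φ) q.2)
    (hφk : ∀ᶠ x in 𝓝 x₀, ∀ ξ,
      fderiv ℝ (fderiv ℝ φ) x ξ ξ + κ * ⟪p, ξ⟫ ^ 2 ≤ k * ‖ξ‖ ^ 2) :
    1 / 2 * fderiv ℝ φ x₀ x₀ + c * (κ * ‖p‖ ^ 2) ≤ N * k := by
  have hle : 𝓝[>] (1 : ℝ) ×ˢ 𝓝 x₀ ≤ 𝓝 (1, x₀) :=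
    (prod_mono_left _ nhdsWithin_le_nhds).trans nhds_prod_eq.ge
  have hlim : Tendsto (fun q : ℝ × E => q.1 ^ 2 * (1 / 2 * fderiv ℝ φ q.2 q.2 -
      (scalingQuotient u q.1 q.2 - eulerDefect u q.2)) + c * (κ * ‖p‖ ^ 2)) (𝓝[>] 1 ×ˢ 𝓝 x₀)
      (𝓝 (1 / 2 * fderiv ℝ φ x₀ x₀ + c * (κ * ‖p‖ ^ 2))) := by
    have hsq : Tendsto (fun q : ℝ × E => q.1 ^ 2) (𝓝[>] 1 ×ˢ 𝓝 x₀) (𝓝 (1 ^ 2)) :=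
      (Continuous.tendsto (by fun_prop) (1, x₀)).mono_left hle
    have hD : Tendsto (fun q : ℝ × E => 1 / 2 * fderiv ℝ φ q.2 q.2) (𝓝[>] 1 ×ˢ 𝓝 x₀)
        (𝓝 (1 / 2 * fderiv ℝ φ x₀ x₀)) := by
      have := hφ.continuous_fderiv two_ne_zero
      exact (Continuous.tendsto (by fun_prop) (1, x₀)).mono_left hle
    simpa using (hsq.mul (hD.sub (tendsto_scalingQuotient_sub_eulerDefect (hu.of_le one_le_two)
      x₀))).add_const (c * (κ * ‖p‖ ^ 2))
  have hm : ∀ᶠ q in 𝓝 ((1 : ℝ), x₀), (q.1 ^ 2 - 1) / q.1 ^ 2 * k ≤ 1 := by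
    have : ContinuousAt (fun q : ℝ × E => (q.1 ^ 2 - 1) / q.1 ^ 2 * k) (1, x₀) := by
      fun_prop (disch := norm_num)
    exact this.eventually (ge_mem_nhds (by norm_num))
  have hsmul : ∀ᶠ q in 𝓝 ((1 : ℝ), x₀), q.1 • q.2 ∈ s :=
    (continuous_smul.tendsto ((1 : ℝ), x₀)).eventually_mem (by simpa using hs)
  have hevent := (tendsto_fst.eventually_mem (self_mem_nhdsWithin (s := Set.Ioi (1 : ℝ)))).and
    ((tendsto_snd.eventually (hφk.and hs)).and (hle (hm.and hsmul)))
  refine le_of_tendsto_of_frequently hlim ((hmax.and_eventually hevent).mono ?_)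
  rintro ⟨l, x⟩ ⟨hlx, hl, ⟨hφx, hxs⟩, hm, hlxs⟩
  exact h.le_of_isLocalMax_scalingQuotient_sub hu hφ hxs hlxs hl hlx hk hκ hm hφx

lemma EllipticOn.isSubsolutionAt_eulerDefect [ProperSpace E] {x₀ : E}
    (h : EllipticOn u (eulerDefect u) N c s) (hu : ContDiff ℝ 2 u) (hs : s ∈ 𝓝 x₀) :
    IsSubsolutionAt N c (eulerDefect u) x₀ := by
  refine isSubsolutionAt_of_forall_perturbation fun φ hφ hmax p k κ ε hk hκ hε hφk => ?_
  set d : E → ℝ := fun x => ‖x - x₀‖ ^ 2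
  set ψ := φ + (ε / 3) • d
  have hd : ContDiff ℝ 2 d := (contDiff_id.sub contDiff_const).norm_sq ℝ
  have hψ : ContDiff ℝ 2 ψ := hφ.add (hd.const_smul (ε / 3))
  have hψ₀ : fderiv ℝ ψ x₀ = fderiv ℝ φ x₀ := by
    have hd₀ := hasFDerivAt_comp_norm_sub_sq differentiable_id x₀ x₀
    rw [sub_self, map_zero, smul_zero] at hd₀
    simpa using ((hφ.differentiable two_ne_zero x₀).hasFDerivAt.add (hd₀.const_smul (ε / 3))).fderiv
  have hψk : ∀ᶠ x in 𝓝 x₀, ∀ ξ,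
      fderiv ℝ (fderiv ℝ ψ) x ξ ξ + κ * ⟪p, ξ⟫ ^ 2 ≤ (k + ε) * ‖ξ‖ ^ 2 := by
    filter_upwards [eventually_fderiv_fderiv_le_add hφ hφk (δ := ε / 3) (by positivity)] with x hx ξ
    simp only [ψ, d, fderiv_fderiv_add_smul hφ hd, _root_.add_apply, _root_.smul_apply,
      fderiv_fderiv_norm_sub_sq, smul_eq_mul]
    linarith [hx ξ]
  have hunif : TendstoLocallyUniformly (fun l => scalingQuotient u l - φ) (eulerDefect u - φ)
      (𝓝[>] 1) := by
    have := tendstoLocallyUniformly_scalingQuotient (hu.of_le one_le_two)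
    rw [Metric.tendstoLocallyUniformly_iff] at this ⊢
    simpa only [Pi.sub_apply, dist_sub_right] using this
  have hfreq : ∃ᶠ q : ℝ × E in 𝓝[>] 1 ×ˢ 𝓝 x₀, IsLocalMax (scalingQuotient u q.1 - ψ) q.2 := by
    refine (frequently_isLocalMax_of_tendstoLocallyUniformly hunif
      (fun l => (contDiff_scalingQuotient hu l).continuous.sub hφ.continuous) hmax
      (ε := ε / 3) (by positivity)).mono fun q hq => ?_
    simpa [ψ, d, dist_eq_norm, Pi.sub_def, Pi.add_def, sub_sub] using hq
  rw [← hψ₀]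
  exact h.le_of_frequently_isLocalMax hu hψ hs (by positivity) hκ hfreq hψk

end Viscosity

section StrongMaximumPrinciple

open Topology

lemma eventually_forall_lt_mul_of_isCompact {X : Type*} [TopologicalSpace X] {K : Set X}
    {g ψ : X → ℝ} (hK : IsCompact K) (hg : Continuous g) (hψ : Continuous ψ)
    (hg_nonpos : ∀ x ∈ K, g x ≤ 0) (hg_neg : ∀ x ∈ K, ψ x ≤ 0 → g x < 0) :
    ∀ᶠ ε : ℝ in 𝓝[>] 0, ∀ x ∈ K, g x < ε * ψ x := by
  refine eventually_nhdsWithin_iff.mpr ((hK.eventually_forall_of_forall_eventually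
    (P := fun ε x => 0 < ε → x ∈ K → g x < ε * ψ x) fun x hx => ?_).mono
      fun ε h hε x hx => h x hx hε hx)
  rcases le_or_gt (ψ x) 0 with hle | hlt
  · have hcont : Continuous fun q : ℝ × X => q.1 * ψ q.2 - g q.2 := by fun_prop
    filter_upwards [(hcont.tendsto' (0, x) (-g x) (by simp)).eventually_const_lt
      (neg_pos.mpr (hg_neg x hx hle))] with q hq _ _
    exact sub_pos.mp hq
  · have hψ_pos : ∀ᶠ q : ℝ × X in 𝓝 (0, x), 0 < ψ q.2 :=
      (hψ.comp continuous_snd).continuousAt.eventually_const_lt hlt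
    filter_upwards [hψ_pos] with q hq hε hK
    exact (hg_nonpos q.2 hK).trans_lt (mul_pos hε hq)

lemma exists_isLocalMax_sub_mul {X : Type*} [MetricSpace X] [ProperSpace X] {w ψ : X → ℝ} {y : X}
    {r : ℝ} (hw : Continuous w) (hψ : Continuous ψ) (hr : 0 < r) (hle : ∀ x, w x ≤ w y)
    (hψy : ψ y = 0) (hlt : ∀ x ∈ Metric.sphere y r, ψ x ≤ 0 → w x < w y) :
    ∃ ε > 0, ∃ x ∈ Metric.ball y r, IsLocalMax (fun x => w x - ε * ψ x) x := by
  obtain ⟨ε, hsphere, hε⟩ := ((eventually_forall_lt_mul_of_isCompact (isCompact_sphere y r)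
    (g := fun x => w x - w y) (by fun_prop) hψ (fun x _ => sub_nonpos.mpr (hle x))
    fun x hx hψx => sub_neg.mpr (hlt x hx hψx)).and eventually_mem_nhdsWithin).exists
  refine ⟨ε, hε, (isCompact_closedBall y r).exists_isLocalMax_mem_open
    Metric.ball_subset_closedBall (by fun_prop) (Metric.mem_closedBall_self hr.le)
    (fun x hx => ?_) Metric.isOpen_ball⟩
  rw [Metric.closedBall_sdiff_ball] at hx
  rw [hψy]
  linarith [hsphere x hx]

variable {E : Type*} [NormedAddCommGroup E] [InnerProductSpace ℝ E] {w : E → ℝ} {N c : ℝ}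

lemma exists_closedBall_inter_eq_singleton [ProperSpace E] {S : Set E} (hS : IsClosed S)
    (hne : S.Nonempty) (huniv : S ≠ Set.univ) :
    ∃ z ρ, 0 < ρ ∧ ∃ y, dist y z = ρ ∧ Metric.closedBall z ρ ∩ S = {y} := by
  obtain ⟨z₀, hz₀⟩ := (Set.ne_univ_iff_exists_notMem S).mp huniv
  obtain ⟨y, hy, hdist⟩ := hS.exists_infDist_eq_dist hne z₀
  have hpos : 0 < dist z₀ y := dist_pos.mpr fun h => hz₀ (h ▸ hy)
  have hz : dist z₀ (midpoint ℝ z₀ y) = dist z₀ y / 2 := by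
    rw [dist_left_midpoint, Real.norm_ofNat]; ring
  have hyz : dist y (midpoint ℝ z₀ y) = dist z₀ y / 2 := by
    rw [dist_comm, dist_midpoint_right, Real.norm_ofNat]; ring
  refine ⟨midpoint ℝ z₀ y, dist z₀ y / 2, by positivity, y, hyz, ?_⟩
  refine Set.eq_singleton_iff_unique_mem.mpr ⟨⟨hyz.le, hy⟩, fun x ⟨hx, hxS⟩ => ?_⟩
  rw [Metric.mem_closedBall, dist_comm] at hx
  have hle : dist z₀ y ≤ dist z₀ x := hdist ▸ Metric.infDist_le_dist_of_mem hxS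
  have htri := dist_triangle z₀ (midpoint ℝ z₀ y) x
  have hmid : midpoint ℝ z₀ y = midpoint ℝ z₀ x :=
    eq_midpoint_of_dist_eq_half (by linarith) (by linarith)
  exact (midpoint_eq_iff.mp hmid.symm).symm.trans (midpoint_eq_iff.mp rfl)

lemma IsSubsolutionAt.le_of_isLocalMax_sub_comp_norm_sub_sq {x : E} {g : ℝ → ℝ}
    (h : IsSubsolutionAt N c w x) (hg : ContDiff ℝ 2 g) (z : E)
    (hmax : IsLocalMax (fun y => w y - g (‖y - z‖ ^ 2)) x)
    (hg' : 0 ≤ deriv g (‖x - z‖ ^ 2)) (hg'' : deriv (deriv g) (‖x - z‖ ^ 2) ≤ 0) :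
    deriv g (‖x - z‖ ^ 2) * ⟪x - z, x⟫ - 4 * c * deriv (deriv g) (‖x - z‖ ^ 2) * ‖x - z‖ ^ 2
      ≤ 2 * N * deriv g (‖x - z‖ ^ 2) := by
  have hφ : ContDiff ℝ 2 fun y : E => g (‖y - z‖ ^ 2) :=
    hg.comp ((contDiff_id.sub contDiff_const).norm_sq ℝ)
  have hle := h _ hφ hmax (x - z) (2 * deriv g (‖x - z‖ ^ 2))
    (-4 * deriv (deriv g) (‖x - z‖ ^ 2)) (by positivity) (by linarith) fun ξ => by
      rw [fderiv_fderiv_comp_norm_sub_sq hg]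
      linarith
  rw [(hasFDerivAt_comp_norm_sub_sq (hg.differentiable two_ne_zero) z x).fderiv] at hle
  simp only [_root_.smul_apply, innerSL_apply_apply, smul_eq_mul] at hle
  linarith

lemma norm_sq_le_of_isLocalMax_sub_mul_norm_sq {x : E} {ε : ℝ} (h : IsSubsolutionAt N c w x)
    (hε : 0 < ε) (hmax : IsLocalMax (fun y => w y - ε * ‖y‖ ^ 2) x) : ‖x‖ ^ 2 ≤ 2 * N := by
  have hd : deriv (fun t => ε * t) = fun _ => ε := by
    ext t; simp
  have := h.le_of_isLocalMax_sub_comp_norm_sub_sq (g := fun t => ε * t) (by fun_prop) 0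
    (by simpa using hmax) (by simp [hd, hε.le]) (by simp [hd])
  simp only [hd, sub_zero, deriv_const, real_inner_self_eq_norm_sq] at this
  exact le_of_mul_le_mul_left (by linarith) hε

/- The maximum of `w - ε‖x‖²` stays in a fixed ball because the drift `½⟨x, Dw⟩` pushes outwards. -/
lemma exists_forall_le_of_isSubsolutionAt [ProperSpace E] {C : ℝ} (hw : Continuous w)
    (hC : ∀ x, w x ≤ C) (h : ∀ x, ∃ c, IsSubsolutionAt N c w x) : ∃ x₀, ∀ x, w x ≤ w x₀ := by
  have hmax (ε : ℝ) (hε : 0 < ε) :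
      ∃ x ∈ Metric.closedBall (0 : E) √(2 * N), ∀ y, w y - ε * ‖y‖ ^ 2 ≤ w x - ε * ‖x‖ ^ 2 := by
    have hlim : Tendsto (fun y => w y - ε * ‖y‖ ^ 2) (cocompact E) atBot := by
      refine tendsto_atBot_mono (fun y => sub_le_sub_right (hC y) _) ?_
      exact tendsto_const_nhds.add_atBot (tendsto_neg_atTop_atBot.comp
        (((tendsto_pow_atTop two_ne_zero).comp tendsto_norm_cocompact_atTop).const_mul_atTop hε))
    obtain ⟨x, hx⟩ := Continuous.exists_forall_ge (by fun_prop) hlim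
    obtain ⟨c, hc⟩ := h x
    refine ⟨x, ?_, hx⟩
    rw [mem_closedBall_zero_iff]
    exact Real.le_sqrt_of_sq_le
      (norm_sq_le_of_isLocalMax_sub_mul_norm_sq hc hε (Eventually.of_forall hx))
  have hne : (Metric.closedBall (0 : E) √(2 * N)).Nonempty := ⟨0, by simp⟩
  obtain ⟨x₀, -, hx₀⟩ := (isCompact_closedBall (0 : E) √(2 * N)).exists_isMaxOn hne hw.continuousOn
  refine ⟨x₀, fun y => ?_⟩
  have hlim : Tendsto (fun ε : ℝ => w x₀ + ε * ‖y‖ ^ 2) (𝓝[>] 0) (𝓝 (w x₀ + 0 * ‖y‖ ^ 2)) :=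
    (Continuous.tendsto (by fun_prop) 0).mono_left nhdsWithin_le_nhds
  rw [zero_mul, add_zero] at hlim
  refine ge_of_tendsto hlim (eventually_mem_nhdsWithin.mono fun ε (hε : 0 < ε) => ?_)
  obtain ⟨x, hx, hxy⟩ := hmax ε hε
  have : w x ≤ w x₀ := hx₀ hx
  have : 0 ≤ ε * ‖x‖ ^ 2 := by positivity
  linarith [hxy y]

lemma IsSubsolutionAt.le_of_isLocalMax_sub_barrier {x : E} {ε γ R : ℝ}
    (h : IsSubsolutionAt N c w x) (z : E) (hε : 0 < ε) (hγ : 0 ≤ γ)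
    (hx : 2 * γ * (‖x - z‖ ^ 2 - R) ≤ 1)
    (hmax : IsLocalMax (fun y => w y - ε * (‖y - z‖ ^ 2 - R - γ * (‖y - z‖ ^ 2 - R) ^ 2)) x) :
    (1 - 2 * γ * (‖x - z‖ ^ 2 - R)) * ⟪x - z, x⟫ + 8 * c * γ * ‖x - z‖ ^ 2
      ≤ 2 * N * (1 - 2 * γ * (‖x - z‖ ^ 2 - R)) := by
  have hd : deriv (fun s => ε * (s - R - γ * (s - R) ^ 2)) =
      fun s => ε * (1 - 2 * γ * (s - R)) := by
    ext s
    have := (((hasDerivAt_id s).sub_const R).sub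
      ((((hasDerivAt_id s).sub_const R).pow 2).const_mul γ)).const_mul ε
    refine this.deriv.trans ?_
    simp only [id, Nat.cast_ofNat]
    ring
  have hdd : deriv (fun s => ε * (1 - 2 * γ * (s - R))) = fun _ => -2 * ε * γ := by
    ext s
    have := ((((hasDerivAt_id s).sub_const R).const_mul (2 * γ)).const_sub 1).const_mul ε
    refine this.deriv.trans ?_
    ring
  have hle := h.le_of_isLocalMax_sub_comp_norm_sub_sq
    (g := fun s => ε * (s - R - γ * (s - R) ^ 2)) (by fun_prop) z hmax
  rw [hd, hdd] at hle
  have := hle (mul_nonneg hε.le (by linarith)) (by nlinarith)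
  exact le_of_mul_le_mul_left (by linarith) hε

/- Hopf's barrier: with `t = ‖x - z‖² - ‖y - z‖²` and `γ` large, `ε (t - γ t²)` is a strict
supersolution near `y`, and for `ε` small `w` minus it has an interior maximum near `y`. -/
lemma not_eventually_isSubsolutionAt_of_touching_ball [ProperSpace E] {y z : E}
    (hw : Continuous w) (hle : ∀ x, w x ≤ w y) (hyz : y ≠ z)
    (hlt : ∀ x, ‖x - z‖ ≤ ‖y - z‖ → x ≠ y → w x < w y) (hc : 0 < c) :
    ¬ ∀ᶠ x in 𝓝 y, IsSubsolutionAt N c w x := by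
  intro hsub
  set ρ := ‖y - z‖
  have hρ : 0 < ρ := norm_pos_iff.mpr (sub_ne_zero.mpr hyz)
  obtain ⟨γ, hγN, hγ⟩ : ∃ γ, 2 * N - ⟪y - z, y⟫ < 8 * c * ρ ^ 2 * γ ∧ 0 < γ :=
    (((tendsto_id.const_mul_atTop (by positivity)).eventually_gt_atTop _).and
      (eventually_gt_atTop 0)).exists
  set t : E → ℝ := fun x => ‖x - z‖ ^ 2 - ρ ^ 2
  have ht_cont : Continuous t := by fun_prop
  have hty : t y = 0 := sub_self _
  have ht_lt : ∀ᶠ x in 𝓝 y, 2 * γ * t x < 1 :=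
    (Continuous.tendsto (by fun_prop) y).eventually_lt_const (by simp [hty])
  have hstrict : ∀ᶠ x in 𝓝 y, 0 < (1 - 2 * γ * t x) * ⟪x - z, x⟫ + 8 * c * γ * ‖x - z‖ ^ 2
      - 2 * N * (1 - 2 * γ * t x) := by
    refine (Continuous.tendsto (by fun_prop) y).eventually_const_lt ?_
    rw [hty]
    linarith
  obtain ⟨r, hr, hball⟩ :=
    Metric.nhds_basis_closedBall.eventually_iff.mp (hsub.and (ht_lt.and hstrict))
  have hsphere : ∀ x ∈ Metric.sphere y r, t x - γ * t x ^ 2 ≤ 0 → w x < w y := by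
    intro x hx hψ
    have htx := (hball (Metric.sphere_subset_closedBall hx)).2.1
    have : t x ≤ 0 := by nlinarith
    refine hlt x ?_ (Metric.ne_of_mem_sphere hx hr.ne')
    exact (sq_le_sq₀ (norm_nonneg _) hρ.le).mp (sub_nonpos.mp this)
  obtain ⟨ε, hε, x, hx, hmax⟩ := exists_isLocalMax_sub_mul (ψ := fun x => t x - γ * t x ^ 2)
    hw (by fun_prop) hr hle (by simp [hty]) hsphere
  obtain ⟨hsub_x, ht_x, hstrict_x⟩ := hball (Metric.ball_subset_closedBall hx)
  linarith [hsub_x.le_of_isLocalMax_sub_barrier z hε hγ.le ht_x.le hmax]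

lemma eq_of_forall_isSubsolutionAt [ProperSpace E] {x₀ : E} (hw : Continuous w)
    (hmax : ∀ x, w x ≤ w x₀) (h : ∀ x, ∃ c > 0, ∀ᶠ y in 𝓝 x, IsSubsolutionAt N c w y) (x : E) :
    w x = w x₀ := by
  suffices {x | w x = w x₀} = Set.univ from this.ge trivial
  by_contra huniv
  obtain ⟨z, ρ, hρ, y, hyz, hball⟩ := exists_closedBall_inter_eq_singleton
    (isClosed_eq hw continuous_const) ⟨x₀, rfl⟩ huniv
  obtain ⟨c, hc, hsub⟩ := h y
  have hy : w y = w x₀ := (hball.ge rfl).2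
  refine not_eventually_isSubsolutionAt_of_touching_ball (y := y) (z := z) hw (hy ▸ hmax)
    (dist_pos.mp (hyz ▸ hρ)) (fun x hx hxy => ?_) hc hsub
  refine (hy ▸ hmax x).lt_of_ne fun hwx => hxy (hball.le ⟨?_, hwx.trans hy⟩)
  rwa [← dist_eq_norm, ← dist_eq_norm, hyz] at hx

end StrongMaximumPrinciple

section EulerIdentity

open Topology

variable {E : Type*} [NormedAddCommGroup E] [NormedSpace ℝ E] {u : E → ℝ} {m : ℝ}

lemma fderiv_fderiv_apply_self_of_eulerDefect_eq (hu : ContDiff ℝ 2 u)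
    (hm : ∀ x, eulerDefect u x = m) (x : E) :
    fderiv ℝ (fderiv ℝ u) x x x = 2 * (u x + m) := by
  have hDu : HasFDerivAt (fun y => fderiv ℝ u y y) _ x :=
    (((hu.fderiv_right (m := 1) le_rfl).differentiable one_ne_zero x).hasFDerivAt).clm_apply
      (hasFDerivAt_id x)
  have hu' := ((hu.differentiable two_ne_zero x).hasFDerivAt.add_const m).const_mul 2
  have heq : (fun y => fderiv ℝ u y y) = fun y => 2 * (u y + m) := by
    ext y
    have := hm y
    rw [eulerDefect] at this
    linarith
  rw [heq] at hDu
  have := DFunLike.congr_fun (hDu.unique hu') x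
  have heqx := congrFun heq x
  simp only [ContinuousLinearMap.comp_id, _root_.add_apply, ContinuousLinearMap.flip_apply,
    _root_.smul_apply, smul_eq_mul] at this
  linarith

lemma add_eq_sq_mul_of_eulerDefect_eq (hu : ContDiff ℝ 1 u) (hm : ∀ x, eulerDefect u x = m)
    (x : E) {t : ℝ} (ht : 0 < t) : u (t • x) + m = t ^ 2 * (u x + m) := by
  have hderiv (s : ℝ) (hs : s ∈ Set.Ioi (0 : ℝ)) :
      HasDerivAt (fun s => (u (s • x) + m) / s ^ 2) 0 s := by
    have hs : s ≠ 0 := (Set.mem_Ioi.mp hs).ne'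
    refine (((hasDerivAt_comp_smul (hu.differentiable one_ne_zero) x s).add_const m).div
      (hasDerivAt_pow 2 s) (pow_ne_zero 2 hs)).congr_deriv ?_
    have := hm (s • x)
    rw [eulerDefect, map_smul, smul_eq_mul] at this
    simp only [div_eq_zero_iff, Nat.cast_ofNat]
    left
    linear_combination 2 * s * this
  have hconst := isOpen_Ioi.is_const_of_deriv_eq_zero isPreconnected_Ioi
    (fun s hs => (hderiv s hs).differentiableAt.differentiableWithinAt)
    (fun s hs => (hderiv s hs).deriv) (Set.mem_Ioi.mpr ht) (Set.mem_Ioi.mpr one_pos)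
  rw [one_smul, one_pow, div_one, div_eq_iff (by positivity)] at hconst
  rw [hconst, mul_comm]

lemma eq_of_eulerDefect_eq (hu : ContDiff ℝ 2 u) (hm : ∀ x, eulerDefect u x = m) (x : E) :
    u x = -m + 1 / 2 * fderiv ℝ (fderiv ℝ u) 0 x x := by
  have hconst : ∀ᶠ t : ℝ in 𝓝[>] 0, fderiv ℝ (fderiv ℝ u) (t • x) x x = 2 * (u x + m) := by
    filter_upwards [self_mem_nhdsWithin] with t ht
    have h := fderiv_fderiv_apply_self_of_eulerDefect_eq hu hm (t • x)
    rw [add_eq_sq_mul_of_eulerDefect_eq (hu.of_le one_le_two) hm x ht] at h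
    simp only [map_smul, _root_.smul_apply, smul_eq_mul] at h
    refine mul_left_cancel₀ (pow_ne_zero 2 (Set.mem_Ioi.mp ht).ne') ?_
    linarith
  have hcont : Continuous fun t : ℝ => fderiv ℝ (fderiv ℝ u) (t • x) x x := by
    have := (hu.fderiv_right (m := 1) le_rfl).continuous_fderiv one_ne_zero
    fun_prop
  have hlim := tendsto_nhds_unique_of_eventuallyEq
    ((hcont.tendsto 0).mono_left nhdsWithin_le_nhds) tendsto_const_nhds hconst
  rw [zero_smul] at hlim
  linarith

end EulerIdentity

section Hessian

variable {n : ℕ} {u : EuclideanSpace ℝ (Fin n) → ℝ}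

lemma eigs_eq_eigenvalues {A : Matrix (Fin n) (Fin n) ℝ} (hA : A.IsHermitian) :
    eigs A = hA.eigenvalues :=
  dif_pos hA

lemma hess_apply (x : EuclideanSpace ℝ (Fin n)) (i j : Fin n) :
    Hess n u x i j =
      fderiv ℝ (fderiv ℝ u) x (EuclideanSpace.single i 1) (EuclideanSpace.single j 1) := by
  simp [Hess, iteratedFDeriv_two_apply]

lemma isHermitian_hess (hu : ContDiff ℝ 2 u) (x : EuclideanSpace ℝ (Fin n)) :
    (Hess n u x).IsHermitian := by
  ext i j
  rw [conjTranspose_apply, star_trivial, hess_apply, hess_apply]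
  exact hu.contDiffAt.isSymmSndFDerivAt (by simp) _ _

lemma sum_sum_mul_mul_hess (x ξ : EuclideanSpace ℝ (Fin n)) :
    ∑ i, ∑ j, Hess n u x i j * ξ i * ξ j = fderiv ℝ (fderiv ℝ u) x ξ ξ := by
  have hξ : ξ = ∑ i, ξ i • EuclideanSpace.single i (1 : ℝ) := by
    simpa using ((EuclideanSpace.basisFun (Fin n) ℝ).sum_repr ξ).symm
  conv_rhs => rw [hξ]
  simp only [map_sum, map_smul, _root_.sum_apply, _root_.smul_apply, smul_eq_mul, hess_apply,
    Finset.mul_sum]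
  rw [Finset.sum_comm]
  exact Finset.sum_congr rfl fun i _ => Finset.sum_congr rfl fun j _ => by ring

lemma dotProduct_hess_mulVec (x ξ : EuclideanSpace ℝ (Fin n)) :
    ξ.ofLp ⬝ᵥ Hess n u x *ᵥ ξ.ofLp = fderiv ℝ (fderiv ℝ u) x ξ ξ := by
  simp only [← sum_sum_mul_mul_hess, dotProduct, mulVec, Finset.mul_sum]
  exact Finset.sum_congr rfl fun i _ => Finset.sum_congr rfl fun j _ => by ring

lemma real_inner_eq_dotProduct (p ξ : EuclideanSpace ℝ (Fin n)) : ⟪p, ξ⟫ = p.ofLp ⬝ᵥ ξ.ofLp := by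
  simp [EuclideanSpace.inner_eq_star_dotProduct, dotProduct_comm]

lemma norm_sq_eq_dotProduct_self (ξ : EuclideanSpace ℝ (Fin n)) :
    ‖ξ‖ ^ 2 = ξ.ofLp ⬝ᵥ ξ.ofLp := by
  rw [← real_inner_self_eq_norm_sq, real_inner_eq_dotProduct]

end Hessian

section UniformEllipticity

lemma exists_mul_norm_sq_le_fderiv_fderiv {E : Type*} [NormedAddCommGroup E]
    [NormedSpace ℝ E] [ProperSpace E] {u : E → ℝ} {K : Set E} {ℓ : ℝ} (hK : IsCompact K)
    (hu : ContDiff ℝ 2 u)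
    (hℓ : ∀ x ∈ K, ∀ ξ ≠ 0, ℓ * ‖ξ‖ ^ 2 < fderiv ℝ (fderiv ℝ u) x ξ ξ) :
    ∃ l > ℓ, ∀ x ∈ K, ∀ ξ, l * ‖ξ‖ ^ 2 ≤ fderiv ℝ (fderiv ℝ u) x ξ ξ := by
  have hcont : Continuous fun q : E × E => fderiv ℝ (fderiv ℝ u) q.1 q.2 q.2 := by
    have := (hu.fderiv_right (m := 1) le_rfl).continuous_fderiv one_ne_zero
    fun_prop
  obtain ⟨l, hl, hmin⟩ := (hK.prod (isCompact_sphere (0 : E) 1)).exists_forall_le'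
    hcont.continuousOn (a := ℓ) (by
      rintro ⟨x, ξ⟩ ⟨hx, hξ⟩
      have := hℓ x hx ξ (ne_zero_of_mem_unit_sphere ⟨ξ, hξ⟩)
      rwa [mem_sphere_zero_iff_norm.mp hξ, one_pow, mul_one] at this)
  refine ⟨l, hl, fun x hx ξ => ?_⟩
  rcases eq_or_ne ξ 0 with rfl | hξ
  · simp
  have hle : l ≤ _ := hmin (x, ‖ξ‖⁻¹ • ξ) ⟨hx, by simp [norm_smul, hξ]⟩
  simp only [map_smul, _root_.smul_apply, smul_eq_mul] at hle
  have := mul_le_mul_of_nonneg_right hle (sq_nonneg ‖ξ‖)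
  field_simp at this
  linarith

lemma exists_fderiv_fderiv_le_mul_norm_sq {E : Type*} [NormedAddCommGroup E]
    [NormedSpace ℝ E] {u : E → ℝ} {K : Set E} (hK : IsCompact K) (hu : ContDiff ℝ 2 u) :
    ∃ r, ∀ x ∈ K, ∀ ξ, fderiv ℝ (fderiv ℝ u) x ξ ξ ≤ r * ‖ξ‖ ^ 2 := by
  obtain ⟨r, hr⟩ := hK.exists_bound_of_continuousOn
    ((hu.fderiv_right (m := 1) le_rfl).continuous_fderiv one_ne_zero).continuousOn
  refine ⟨r, fun x hx ξ => (le_abs_self _).trans ?_⟩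
  have := (fderiv ℝ (fderiv ℝ u) x).le_of_opNorm₂_le_of_le (hr x hx) (le_refl ‖ξ‖) (le_refl ‖ξ‖)
  rwa [Real.norm_eq_abs, mul_assoc, ← sq] at this

variable {f : ℝ → ℝ} {ℓ L : ℝ}

lemma exists_pos_slope_bounds {l r : ℝ} (hf : ContDiffOn ℝ 1 f (Set.Ioi ℓ))
    (hpos : ∀ s > ℓ, 0 < deriv f s) (hL : ∀ s > ℓ, deriv f s ≤ L) (hl : ℓ < l) :
    ∃ c > 0, ∀ x ∈ Set.Icc l r, ∀ y ∈ Set.Icc l r, x ≤ y →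
      c * (y - x) ≤ f y - f x ∧ f y - f x ≤ L * (y - x) := by
  have hsub : Set.Icc l r ⊆ Set.Ioi ℓ := fun s hs => hl.trans_le hs.1
  have hfc := hf.continuousOn.mono hsub
  have hfd := (hf.differentiableOn one_ne_zero).mono (interior_subset.trans hsub)
  obtain ⟨c, hc, hmin⟩ := (isCompact_Icc (a := l) (b := r)).exists_forall_le' (a := 0)
    ((hf.continuousOn_deriv_of_isOpen isOpen_Ioi le_rfl).mono hsub) fun s hs => hpos s (hsub hs)
  exact ⟨c, hc, fun x hx y hy hxy =>
    ⟨(convex_Icc l r).mul_sub_le_image_sub_of_le_deriv hfc hfd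
      (fun s hs => hmin s (interior_subset hs)) x hx y hy hxy,
    (convex_Icc l r).image_sub_le_mul_sub_of_deriv_le hfc hfd
      (fun s hs => hL s (hsub (interior_subset hs))) x hx y hy hxy⟩⟩

lemma exists_ellipticOn_sum_eigs_hess {n : ℕ} {u : EuclideanSpace ℝ (Fin n) → ℝ}
    {K : Set (EuclideanSpace ℝ (Fin n))} (hf : ContDiffOn ℝ 1 f (Set.Ioi ℓ))
    (hpos : ∀ s > ℓ, 0 < deriv f s) (hL : ∀ s > ℓ, deriv f s ≤ L) (hu : ContDiff ℝ 2 u)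
    (hK : IsCompact K)
    (hℓ : ∀ x ∈ K, ∀ ξ ≠ 0, ℓ * ‖ξ‖ ^ 2 < fderiv ℝ (fderiv ℝ u) x ξ ξ) :
    ∃ c > 0, EllipticOn u (fun x => ∑ i, f (eigs (Hess n u x) i)) (L * n) c K := by
  obtain ⟨l, hl, hlu⟩ := exists_mul_norm_sq_le_fderiv_fderiv hK hu hℓ
  obtain ⟨r, hru⟩ := exists_fderiv_fderiv_le_mul_norm_sq hK hu
  obtain ⟨c, hc, hslope⟩ := exists_pos_slope_bounds (r := r + 1) hf hpos hL hl
  refine ⟨c, hc, fun x hx y hy p m κ hm hm1 hκ hle => ?_⟩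
  have hX := isHermitian_hess hu x
  have hY := isHermitian_hess hu y
  simp only [eigs_eq_eigenvalues hX, eigs_eq_eigenvalues hY]
  simp only [← dotProduct_hess_mulVec, real_inner_eq_dotProduct, norm_sq_eq_dotProduct_self]
    at hle hlu hru ⊢
  have hr (v : Fin n → ℝ) : v ⬝ᵥ Hess n u x *ᵥ v + m * (v ⬝ᵥ v) ≤ (r + 1) * (v ⬝ᵥ v) := by
    have := hru x hx (WithLp.toLp 2 v)
    have : m * (v ⬝ᵥ v) ≤ 1 * (v ⬝ᵥ v) :=
      mul_le_mul_of_nonneg_right hm1 (by simpa using dotProduct_star_self_nonneg v)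
    linarith
  have := sum_eigenvalues_add_le hX hY hc.le hm hκ (fun v => hle (WithLp.toLp 2 v))
    (fun v => hlu x hx (WithLp.toLp 2 v)) hr (fun v => hlu y hy (WithLp.toLp 2 v))
    (fun s hs t ht hst => (hslope s hs t ht hst).1) (fun s hs t ht hst => (hslope s hs t ht hst).2)
  rwa [Fintype.card_fin, ← mul_assoc L] at this

end UniformEllipticity

section Phase

variable {a b s : ℝ}

/-- The phase function of the operator in `bernstein_tau_gt_pi_div_four`, for `a = cot τ` and
`b = √(1 - cot² τ)`, as a function of a single eigenvalue `s > -(a + b)`. -/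
def phase (a b s : ℝ) : ℝ :=
  √(a ^ 2 + 1) / b * arctan ((s + a - b) / (s + a + b))

lemma hasDerivAt_phase (hb : 0 < b) (hs : s > -(a + b)) :
    HasDerivAt (phase a b) (√(a ^ 2 + 1) / ((s + a) ^ 2 + b ^ 2)) s := by
  have hpos : 0 < s + a + b := by linarith
  have hquot : HasDerivAt (fun s => (s + a - b) / (s + a + b)) _ s :=
    (((hasDerivAt_id s).add_const a).sub_const b).div
      (((hasDerivAt_id s).add_const a).add_const b) hpos.ne'
  refine (hquot.arctan.const_mul (√(a ^ 2 + 1) / b)).congr_deriv ?_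
  simp only [id]
  field_simp
  ring

lemma contDiffOn_phase : ContDiffOn ℝ 1 (phase a b) (Set.Ioi (-(a + b))) := by
  have hquot : ContDiffOn ℝ 1 (fun s => (s + a - b) / (s + a + b)) (Set.Ioi (-(a + b))) :=
    ContDiffOn.div (by fun_prop) (by fun_prop) fun s hs => by linarith [Set.mem_Ioi.mp hs]
  exact contDiffOn_const.mul hquot.arctan

lemma deriv_phase_pos (hb : 0 < b) (hs : s > -(a + b)) : 0 < deriv (phase a b) s := by
  rw [(hasDerivAt_phase hb hs).deriv]
  positivity

lemma deriv_phase_le (hb : 0 < b) (hs : s > -(a + b)) :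
    deriv (phase a b) s ≤ √(a ^ 2 + 1) / b ^ 2 := by
  rw [(hasDerivAt_phase hb hs).deriv]
  gcongr
  exact le_add_of_nonneg_left (sq_nonneg _)

lemma phase_le (hb : 0 < b) : phase a b s ≤ √(a ^ 2 + 1) / b * (π / 2) := by
  unfold phase
  gcongr
  exact (arctan_lt_pi_div_two _).le

end Phase

section Rigidity

open Topology

variable {n : ℕ} {u : EuclideanSpace ℝ (Fin n) → ℝ}

lemma lt_fderiv_fderiv_of_posDef_hess_sub {ℓ : ℝ} {x ξ : EuclideanSpace ℝ (Fin n)}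
    (h : (Hess n u x - ℓ • (1 : Matrix (Fin n) (Fin n) ℝ)).PosDef) (hξ : ξ ≠ 0) :
    ℓ * ‖ξ‖ ^ 2 < fderiv ℝ (fderiv ℝ u) x ξ ξ := by
  have := h.dotProduct_mulVec_pos ((WithLp.ofLp_eq_zero 2).not.mpr hξ)
  simp only [star_trivial, sub_mulVec, dotProduct_sub, dotProduct_hess_mulVec, smul_mulVec,
    one_mulVec, dotProduct_smul, smul_eq_mul, ← norm_sq_eq_dotProduct_self] at this
  linarith

lemma eulerDefect_eq_eulerDefect {f : ℝ → ℝ} {ℓ L M : ℝ}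
    (hf : ContDiffOn ℝ 1 f (Set.Ioi ℓ)) (hf_pos : ∀ s > ℓ, 0 < deriv f s)
    (hfL : ∀ s > ℓ, deriv f s ≤ L) (hfM : ∀ s > ℓ, f s ≤ M) (hu : ContDiff ℝ 2 u)
    (hadm : ∀ x, (Hess n u x - ℓ • (1 : Matrix (Fin n) (Fin n) ℝ)).PosDef)
    (heq : eulerDefect u = fun x => ∑ i, f (eigs (Hess n u x) i)) (x y : EuclideanSpace ℝ (Fin n)) :
    eulerDefect u x = eulerDefect u y := by
  have hsub (z : EuclideanSpace ℝ (Fin n)) :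
      ∃ c > 0, ∀ᶠ y in 𝓝 z, IsSubsolutionAt (L * n) c (eulerDefect u) y := by
    obtain ⟨c, hc, hell⟩ := exists_ellipticOn_sum_eigs_hess hf hf_pos hfL hu
      (isCompact_closedBall z 1) fun y _ ξ hξ => lt_fderiv_fderiv_of_posDef_hess_sub (hadm y) hξ
    rw [← heq] at hell
    refine ⟨c, hc, mem_of_superset (Metric.ball_mem_nhds z one_pos) fun y hy => ?_⟩
    exact hell.isSubsolutionAt_eulerDefect hu
      (mem_of_superset (Metric.isOpen_ball.mem_nhds hy) Metric.ball_subset_closedBall)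
  have hcont := continuous_eulerDefect (hu.of_le one_le_two)
  have hbdd (z : EuclideanSpace ℝ (Fin n)) : eulerDefect u z ≤ n * M := by
    simp only [heq, eigs_eq_eigenvalues (isHermitian_hess hu z)]
    refine (Finset.sum_le_card_nsmul _ _ M fun i _ =>
      hfM _ (lt_eigenvalues_of_posDef_sub (isHermitian_hess hu z) (hadm z) i)).trans_eq ?_
    simp
  obtain ⟨x₀, hx₀⟩ := exists_forall_le_of_isSubsolutionAt hcont hbdd
    fun z => (hsub z).imp fun c hc => hc.2.self_of_nhds
  rw [eq_of_forall_isSubsolutionAt hcont hx₀ hsub x, eq_of_forall_isSubsolutionAt hcont hx₀ hsub y]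

theorem bernstein_tau_gt_pi_div_four_general {f : ℝ → ℝ} {ℓ L M : ℝ}
    (hf : ContDiffOn ℝ 1 f (Set.Ioi ℓ)) (hf_pos : ∀ s > ℓ, 0 < deriv f s)
    (hfL : ∀ s > ℓ, deriv f s ≤ L) (hfM : ∀ s > ℓ, f s ≤ M) (hu : ContDiff ℝ 2 u)
    (hadm : ∀ x, (Hess n u x - ℓ • (1 : Matrix (Fin n) (Fin n) ℝ)).PosDef)
    (heq : ∀ x, ∑ i, f (eigs (Hess n u x) i) = -u x + 1 / 2 * ⟪x, gradient u x⟫) :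
    IsQuadPoly n u ∧ ∃ (A : Matrix (Fin n) (Fin n) ℝ) (hA : A.IsHermitian), ∀ x,
      u x = -∑ i, f (hA.eigenvalues i) + 1 / 2 * ∑ i, ∑ j, A i j * x i * x j := by
  have hw : eulerDefect u = fun x => ∑ i, f (eigs (Hess n u x) i) := by
    ext x
    rw [heq, eulerDefect, real_inner_comm, gradient, InnerProductSpace.toDual_symm_apply]
  have hconst := eulerDefect_eq_eulerDefect hf hf_pos hfL hfM hu hadm hw
  have hA := isHermitian_hess hu 0
  have hrep (x : EuclideanSpace ℝ (Fin n)) : u x = -∑ i, f (hA.eigenvalues i) +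
      1 / 2 * ∑ i, ∑ j, Hess n u 0 i j * x i * x j := by
    rw [sum_sum_mul_mul_hess, ← eigs_eq_eigenvalues hA, ← congrFun hw 0]
    exact eq_of_eulerDefect_eq hu (fun y => hconst y 0) x
  refine ⟨⟨Hess n u 0, 0, -∑ i, f (hA.eigenvalues i), ?_, fun x => ?_⟩, Hess n u 0, hA, hrep⟩
  · exact (conjTranspose_eq_transpose_of_trivial _).symm.trans hA
  · rw [inner_zero_left, add_zero, hrep, add_comm]

end Rigidity

theorem bernstein_tau_gt_pi_div_four (n : ℕ) (hn : 1 ≤ n) (a b : ℝ)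
    (ha0 : 0 < a) (ha1 : a < 1) (hb : b = Real.sqrt (1 - a ^ 2))
    (u : EuclideanSpace ℝ (Fin n) → ℝ)
    (hu : ContDiff ℝ 2 u)
    (hadm : ∀ x, (Hess n u x + (a + b) • (1 : Matrix (Fin n) (Fin n) ℝ)).PosDef)
    (heq : ∀ x, (Real.sqrt (a ^ 2 + 1) / b) *
        ∑ i, Real.arctan ((eigs (Hess n u x) i + a - b) / (eigs (Hess n u x) i + a + b))
      = -u x + (1/2) * ⟪x, gradient u x⟫) :
    IsQuadPoly n u ∧
    ∃ (A : Matrix (Fin n) (Fin n) ℝ) (hA : A.IsHermitian),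
      ∀ x, u x = -(Real.sqrt (a ^ 2 + 1) / b) *
          (∑ i, Real.arctan ((hA.eigenvalues i + a - b) / (hA.eigenvalues i + a + b)))
        + (1/2) * (∑ i, ∑ j, A i j * x i * x j) := by
  have hb_pos : 0 < b := hb ▸ Real.sqrt_pos.mpr (by nlinarith)
  simp only [neg_mul, Finset.mul_sum _ fun _ => arctan _, Finset.sum_neg_distrib] at heq ⊢
  exact bernstein_tau_gt_pi_div_four_general contDiffOn_phase (fun s => deriv_phase_pos hb_pos)
    (fun s => deriv_phase_le hb_pos) (fun s _ => phase_le hb_pos) hu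
    (by simpa only [neg_smul, sub_neg_eq_add] using hadm) heq
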